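/- arXiv:1901.03458 — 2 statements merged into one kernel-verified Lean document; each statement's English description precedes it below -/
import Mathlib

section
/- For real parameters μ < −4 and t < 0 with t²/4 + μ − 1 > 0 (the parameter lies outside the parabola μ = 1 − t²/4), define f_{μ,t} : ℝ → ℝ by f_{μ,t}(x) = 2μx(tx+2)/(μ²x² + (tx+2)²); it maps the interval [−1,1] into itself. Then the topological entropy of the induced self-map of [−1,1] equals log 2. -/
/-!
Upper bound: fix a finite `ε`-dense set `G`. Up to time `n`, the orbit of `x` is `ε`-shadowed by
that of the largest `s ≤ x` whose orbit visits `G` before time `n`: if the two orbits were `ε` apart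
at time `k`, then `f^[k]` would take a value in `G` strictly between `f^[k] s` and `f^[k] x`, hence
at a point of `(s, x]`. As every fibre of `f` has at most two points, there are `O(2 ^ n)` such `s`.

Lower bound: in the coordinate `x = 2 / (μ * u - t)` the map reads `u ↦ 2 * u / (1 + u ^ 2)`. Being
outside the parabola provides a real root `w` of `1 + w ^ 2 = μ - t * w`, so that the point `b` with
coordinate `w⁻¹` is fixed, the point `a` with coordinate `w` is mapped to `b`, and the minimum `-1`,
attained at coordinate `-1`, lies below `a`. The two laps of the map over `[a, b]` thus form a
horseshoe.
-/

open Set Dynamics ExpGrowth Function UniformSpace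
open scoped Uniformity

lemma coverEntropyEntourage_le_log_of_coverMincard_le {X : Type*} {T : X → X} {F : Set X}
    {U : SetRel X X} {C N : ℕ} (h : ∀ n, coverMincard T F U n ≤ C * N ^ n) :
    coverEntropyEntourage T F U ≤ ENNReal.log N := by
  rw [← expGrowthSup_pow]
  refine expGrowthSup_le_of_eventually_le (ENNReal.natCast_ne_top C) (.of_forall fun n ↦ ?_)
  simpa using ENat.toENNReal_mono (h n)

lemma encard_inter_preimage_le_mul {X Y : Type*} {f : X → Y} {F : Set X} {S : Set Y} {N : ℕ}
    (h : ∀ y ∈ S, (F ∩ f ⁻¹' {y}).encard ≤ N) : (F ∩ f ⁻¹' S).encard ≤ N * S.encard := by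
  rcases S.finite_or_infinite with hS | hS
  · lift S to Finset Y using hS
    have hcover : F ∩ f ⁻¹' S = ⋃ y ∈ S, F ∩ f ⁻¹' {y} := by ext; simp
    calc (F ∩ f ⁻¹' S).encard ≤ ∑ y ∈ S, (F ∩ f ⁻¹' {y}).encard :=
          hcover ▸ S.set_encard_biUnion_le _
      _ ≤ S.card • (N : ℕ∞) := Finset.sum_le_card_nsmul _ _ _ h
      _ = N * (S : Set Y).encard := by rw [encard_coe_eq_coe_finsetCard, nsmul_eq_mul, mul_comm]
  · rcases N.eq_zero_or_pos with rfl | hN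
    · have hempty : F ∩ f ⁻¹' S = ∅ := eq_empty_of_forall_notMem fun x hx ↦ by
        have := h (f x) hx.2
        simp only [CharP.cast_eq_zero, nonpos_iff_eq_zero, encard_eq_zero] at this
        exact this.le ⟨hx.1, rfl⟩
      simp [hempty]
    · rw [hS.encard_eq, ENat.mul_top (by exact_mod_cast hN.ne')]
      exact le_top

/-- The points of `F` whose orbit under `f` visits `G` at some time `k < n`. For `G` a fine net they
are the centres of dynamical covers of an interval. -/
def visitors {X : Type*} (f : X → X) (F G : Set X) (n : ℕ) : Set X :=
  {x ∈ F | ∃ k < n, f^[k] x ∈ G}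

-- The summand `G.encard` on the left is what makes the induction on `n` close.
lemma encard_visitors_add_encard_le {X : Type*} {f : X → X} {F : Set X} (hF : MapsTo f F F)
    {N : ℕ} (hN : 2 ≤ N) (hfib : ∀ y ∈ F, (F ∩ f ⁻¹' {y}).encard ≤ N) (G : Set X) (n : ℕ) :
    (visitors f F G n).encard + G.encard ≤ G.encard * N ^ n := by
  induction n with
  | zero => simp [visitors]
  | succ n ih =>
    have hstep : visitors f F G (n + 1) ⊆ G ∪ (F ∩ f ⁻¹' visitors f F G n) := by
      rintro x ⟨hx, _ | k, hk, hxk⟩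
      · exact .inl hxk
      · exact .inr ⟨hx, hF hx, k, by lia, hxk⟩
    have hP : (F ∩ f ⁻¹' visitors f F G n).encard ≤ N * (visitors f F G n).encard :=
      encard_inter_preimage_le_mul fun y hy ↦ hfib y hy.1
    calc _ ≤ G.encard + N * (visitors f F G n).encard + G.encard := by
          gcongr
          exact (encard_mono hstep).trans ((encard_union_le _ _).trans (by gcongr))
      _ = N * (visitors f F G n).encard + 2 * G.encard := by ring
      _ ≤ N * (visitors f F G n).encard + N * G.encard := by gcongr; exact_mod_cast hN
      _ = N * ((visitors f F G n).encard + G.encard) := by ring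
      _ ≤ N * (G.encard * N ^ n) := by gcongr
      _ = G.encard * N ^ (n + 1) := by ring

lemma exists_finite_forall_exists_mem_uIoo (a b : ℝ) {ε : ℝ} (hε : 0 < ε) :
    ∃ G : Set ℝ, G.Finite ∧
      ∀ c ∈ Icc a b, ∀ d ∈ Icc a b, ε ≤ dist c d → ∃ g ∈ G, g ∈ uIoo c d := by
  obtain ⟨G, -, hGfin, hG⟩ := isCompact_Icc (a := a) (b := b).finite_cover_balls (half_pos hε)
  refine ⟨G, hGfin, fun c hc d hd hcd ↦ ?_⟩
  obtain ⟨g, hgG, hg⟩ := mem_iUnion₂.1 (hG (show (c + d) / 2 ∈ Icc a b from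
    ⟨by linarith [hc.1, hd.1], by linarith [hc.2, hd.2]⟩))
  refine ⟨g, hgG, ?_⟩
  rw [Metric.mem_ball, Real.dist_eq, abs_lt] at hg
  rw [Real.dist_eq] at hcd
  rcases le_abs'.1 hcd with h | h
  · rw [uIoo_of_le (by linarith)]
    constructor <;> linarith
  · rw [uIoo_of_ge (by linarith)]
    constructor <;> linarith

lemma isDynCoverOf_insert_visitors {f : ℝ → ℝ} {a b ε : ℝ} (hf : ContinuousOn f (Icc a b))
    (hmaps : MapsTo f (Icc a b) (Icc a b)) {G : Set ℝ}
    (hG : ∀ c ∈ Icc a b, ∀ d ∈ Icc a b, ε ≤ dist c d → ∃ g ∈ G, g ∈ uIoo c d) {n : ℕ}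
    (hfin : (visitors f (Icc a b) G n).Finite) :
    IsDynCoverOf f (Icc a b) {p | dist p.1 p.2 < ε} n (insert a (visitors f (Icc a b) G n)) := by
  intro x hx
  obtain ⟨s, ⟨hs, hsx⟩, hsmax⟩ := ((hfin.insert a).inter_of_left (Iic x)).exists_maximal
    ⟨a, mem_insert a _, hx.1⟩
  have hsub : Icc s x ⊆ Icc a b := by
    refine Icc_subset_Icc ?_ hx.2
    rcases hs with rfl | hs
    exacts [le_rfl, hs.1.1]
  refine ⟨s, hs, mem_dynEntourage.2 fun k hk ↦ ?_⟩
  by_contra! hfar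
  obtain ⟨g, hgG, hg⟩ := hG _ (hmaps.iterate k (hsub ⟨hsx, le_rfl⟩)) _
    (hmaps.iterate k (hsub ⟨le_rfl, hsx⟩)) (not_lt.1 hfar)
  have hcont : ContinuousOn f^[k] (uIcc x s) :=
    uIcc_of_ge (mem_Iic.1 hsx) ▸ (hf.iterate hmaps k).mono hsub
  obtain ⟨z, hz, rfl⟩ := intermediate_value_uIcc hcont (uIoo_subset_uIcc_self hg)
  rw [uIcc_of_ge hsx] at hz
  have hzs : z = s := (hsmax ⟨.inr ⟨hsub hz, k, hk, hgG⟩, hz.2⟩ hz.1).antisymm hz.1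
  exact right_notMem_uIoo (hzs ▸ hg)

theorem coverEntropy_Icc_le_log_of_encard_fiber_le {f : ℝ → ℝ} {a b : ℝ}
    (hf : ContinuousOn f (Icc a b)) (hmaps : MapsTo f (Icc a b) (Icc a b)) {N : ℕ} (hN : 2 ≤ N)
    (hfib : ∀ y ∈ Icc a b, (Icc a b ∩ f ⁻¹' {y}).encard ≤ N) :
    coverEntropy f (Icc a b) ≤ ENNReal.log N := by
  rw [coverEntropy_eq_iSup_basis Metric.uniformity_basis_dist]
  refine iSup₂_le fun ε hε ↦ ?_
  obtain ⟨G, hGfin, hG⟩ := exists_finite_forall_exists_mem_uIoo a b hε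
  lift G to Finset ℝ using hGfin
  refine coverEntropyEntourage_le_log_of_coverMincard_le (C := G.card + 1) fun n ↦ ?_
  have hcard : (visitors f (Icc a b) G n).encard ≤ (G.card * N ^ n : ℕ) := by
    have := le_self_add.trans (encard_visitors_add_encard_le hmaps hN hfib G n)
    simpa using this
  have hfin : (visitors f (Icc a b) G n).Finite := finite_of_encard_le_coe hcard
  have hcover := isDynCoverOf_insert_visitors hf hmaps hG hfin
  rw [← (hfin.insert a).coe_toFinset] at hcover
  calc _ ≤ ((hfin.insert a).toFinset.card : ℕ∞) := hcover.coverMincard_le_card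
    _ = (insert a (visitors f (Icc a b) G n)).encard :=
      (hfin.insert a).encard_eq_coe_toFinset_card.symm
    _ ≤ G.card * N ^ n + 1 := (encard_insert_le _ _).trans (by gcongr; exact_mod_cast hcard)
    _ ≤ G.card * N ^ n + N ^ n := by gcongr; exact_mod_cast Nat.one_le_pow _ _ (by lia)
    _ = (G.card + 1 : ℕ) * N ^ n := by push_cast; ring

/-- A topological horseshoe for `T`: pairwise disjoint nonempty compact sets, the image of each of
which covers all of them. Its orbits realize every finite itinerary in `ι`, which bounds the entropy
from below. The map `T` is not required to be continuous, nor `K i` to be invariant. -/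
structure IsHorseshoe {X ι : Type*} [TopologicalSpace X] (T : X → X) (K : ι → Set X) : Prop where
  isCompact : ∀ i, IsCompact (K i)
  nonempty : ∀ i, (K i).Nonempty
  pairwise_disjoint : Pairwise (Disjoint on K)
  subset_image : ∀ i j, K j ⊆ T '' K i

namespace IsHorseshoe

lemma exists_itinerary {X ι : Type*} [TopologicalSpace X] [Nonempty ι] {T : X → X} {K : ι → Set X}
    (h : IsHorseshoe T K) {n : ℕ} (w : Fin n → ι) :
    ∃ x ∈ ⋃ i, K i, ∀ k : Fin n, T^[k] x ∈ K (w k) := by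
  induction n with
  | zero =>
    obtain ⟨x, hx⟩ := h.nonempty (Classical.arbitrary ι)
    exact ⟨x, mem_iUnion_of_mem _ hx, finZeroElim⟩
  | succ n ih =>
    obtain ⟨y, hy, hyw⟩ := ih (Fin.tail w)
    obtain ⟨j, hyj⟩ := mem_iUnion.1 hy
    obtain ⟨x, hx, rfl⟩ := h.subset_image (w 0) j hyj
    exact ⟨x, mem_iUnion_of_mem _ hx, Fin.cases hx hyw⟩

variable {X ι : Type*} [UniformSpace X] {T : X → X} {K : ι → Set X}

lemma exists_entourage_disjoint_ball [T2Space X] [Finite ι] (h : IsHorseshoe T K) :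
    ∃ U ∈ 𝓤 X, ∀ i j, i ≠ j → ∀ x ∈ K i, ∀ y ∈ K j, Disjoint (ball x U) (ball y U) := by
  have hpair (i j : ι) : ∃ U ∈ 𝓤 X, i ≠ j → ∀ x ∈ K i, ∀ y ∈ K j,
      Disjoint (ball x U) (ball y U) := by
    rcases eq_or_ne i j with rfl | hij
    · exact ⟨univ, Filter.univ_mem, by simp⟩
    · obtain ⟨U, hU, hdisj⟩ := (h.pairwise_disjoint hij).exists_uniform_thickening
        (h.isCompact i) (h.isCompact j).isClosed
      simp only [disjoint_iUnion_left, disjoint_iUnion_right] at hdisj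
      exact ⟨U, hU, fun _ x hx y hy ↦ hdisj y hy x hx⟩
  choose U hU hdisj using hpair
  refine ⟨⋂ i, ⋂ j, U i j, by simpa only [Filter.iInter_mem] using hU, ?_⟩
  intro i j hij x hx y hy
  exact (hdisj i j hij x hx y hy).mono (ball_mono (iInter₂_subset i j) x)
    (ball_mono (iInter₂_subset i j) y)

lemma card_pow_le_netMaxcard [Nonempty ι] [Fintype ι] (h : IsHorseshoe T K) {F : Set X}
    (hF : ⋃ i, K i ⊆ F) {U : SetRel X X}
    (hU : ∀ i j, i ≠ j → ∀ x ∈ K i, ∀ y ∈ K j, Disjoint (ball x U) (ball y U)) (n : ℕ) :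
    (Fintype.card ι ^ n : ℕ) ≤ netMaxcard T F U n := by
  classical
  choose z hzK hz using fun w : Fin n → ι ↦ h.exists_itinerary w
  have hinj : Injective z := fun v w hvw ↦ funext fun k ↦
    by_contra fun hk ↦ (h.pairwise_disjoint hk).le_bot ⟨hz v k, hvw ▸ hz w k⟩
  have hnet : IsDynNetIn T F U n (Finset.univ.image z : Finset X) := by
    rw [Finset.coe_image, Finset.coe_univ, image_univ]
    refine ⟨range_subset_iff.2 fun w ↦ hF (hzK w), ?_⟩
    rintro _ ⟨v, rfl⟩ _ ⟨w, rfl⟩ hvw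
    obtain ⟨k, hk⟩ := ne_iff.1 (ne_of_apply_ne z hvw)
    refine disjoint_left.2 fun q hqv hqw ↦ ?_
    exact (hU _ _ hk _ (hz v k) _ (hz w k)).le_bot
      ⟨mem_ball_dynEntourage.1 hqv k k.2, mem_ball_dynEntourage.1 hqw k k.2⟩
  simpa [Finset.card_image_of_injective _ hinj] using hnet.card_le_netMaxcard

theorem log_card_le_coverEntropy [T2Space X] [Fintype ι] (h : IsHorseshoe T K) {F : Set X}
    (hF : ⋃ i, K i ⊆ F) : ENNReal.log (Fintype.card ι) ≤ coverEntropy T F := by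
  cases isEmpty_or_nonempty ι
  · simp
  obtain ⟨U, hU, hdisj⟩ := h.exists_entourage_disjoint_ball
  refine le_trans ?_ (netEntropyEntourage_le_coverEntropy T F hU)
  rw [← expGrowthSup_pow]
  refine expGrowthSup_monotone fun n ↦ ?_
  simpa using ENat.toENNReal_mono (h.card_pow_le_netMaxcard hF hdisj n)

end IsHorseshoe

lemma isHorseshoe_of_fold {α : Type*} [ConditionallyCompleteLinearOrder α] [DenselyOrdered α]
    [TopologicalSpace α] [OrderTopology α] {f : α → α} {a m b : α}
    (hf : ContinuousOn f (Icc a b)) (ham : a ≤ m) (hmb : m ≤ b) (hfa : b ≤ f a) (hfb : b ≤ f b)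
    (hfm : f m < a) :
    IsHorseshoe f ![Icc a m ∩ f ⁻¹' Icc a b, Icc m b ∩ f ⁻¹' Icc a b] := by
  have hleft : ContinuousOn f (Icc a m) := hf.mono (Icc_subset_Icc_right hmb)
  have hright : ContinuousOn f (Icc m b) := hf.mono (Icc_subset_Icc_left ham)
  have hcompact {c d : α} (hcont : ContinuousOn f (Icc c d)) :
      IsCompact (Icc c d ∩ f ⁻¹' Icc a b) :=
    isCompact_Icc.of_isClosed_subset
      (hcont.preimage_isClosed_of_isClosed isClosed_Icc isClosed_Icc) inter_subset_left
  have himage_left : Icc a b ⊆ f '' (Icc a m ∩ f ⁻¹' Icc a b) := by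
    rw [image_inter_preimage]
    exact subset_inter ((Icc_subset_Icc hfm.le hfa).trans (intermediate_value_Icc' ham hleft))
      Subset.rfl
  have himage_right : Icc a b ⊆ f '' (Icc m b ∩ f ⁻¹' Icc a b) := by
    rw [image_inter_preimage]
    exact subset_inter ((Icc_subset_Icc hfm.le hfb).trans (intermediate_value_Icc hmb hright))
      Subset.rfl
  have hab : (Icc a b).Nonempty := nonempty_Icc.2 (ham.trans hmb)
  have hdisj : Disjoint (Icc a m ∩ f ⁻¹' Icc a b) (Icc m b ∩ f ⁻¹' Icc a b) := by
    refine disjoint_left.2 fun x hx hx' ↦ hfm.not_ge ?_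
    rw [← hx.1.2.antisymm hx'.1.1]
    exact hx.2.1
  refine ⟨?_, ?_, ?_, ?_⟩
  · exact Fin.forall_fin_two.2 ⟨hcompact hleft, hcompact hright⟩
  · exact Fin.forall_fin_two.2 ⟨(hab.mono himage_left).of_image, (hab.mono himage_right).of_image⟩
  · intro i j hij
    fin_cases i <;> fin_cases j
    exacts [absurd rfl hij, hdisj, hdisj.symm, absurd rfl hij]
  · have hsub : ∀ j, ![Icc a m ∩ f ⁻¹' Icc a b, Icc m b ∩ f ⁻¹' Icc a b] j ⊆ Icc a b :=
      Fin.forall_fin_two.2 ⟨inter_subset_left.trans (Icc_subset_Icc_right hmb),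
        inter_subset_left.trans (Icc_subset_Icc_left ham)⟩
    exact Fin.forall_fin_two.2 ⟨fun j ↦ (hsub j).trans himage_left,
      fun j ↦ (hsub j).trans himage_right⟩

open Polynomial in
lemma encard_setOf_quadratic_eq_zero_le_two {R : Type*} [CommRing R] [IsDomain R] {a b c : R}
    (h : a ≠ 0 ∨ b ≠ 0 ∨ c ≠ 0) : {x | a * x ^ 2 + b * x + c = 0}.encard ≤ 2 := by
  classical
  set p : R[X] := C a * X ^ 2 + C b * X + C c with hp
  have hp0 : p ≠ 0 := by
    intro h0
    have ha : a = p.coeff 2 := by simp [hp]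
    have hb : b = p.coeff 1 := by simp [hp, coeff_C]
    have hc : c = p.coeff 0 := by simp [hp]
    simp [ha, hb, hc, h0] at h
  have hroots : {x | a * x ^ 2 + b * x + c = 0} = p.roots.toFinset := by
    ext x
    rw [Finset.mem_coe, Multiset.mem_toFinset, mem_roots hp0, IsRoot.def]
    simp [hp]
  rw [hroots, encard_coe_eq_coe_finsetCard]
  exact_mod_cast p.roots.toFinset_card_le.trans
    (p.card_roots'.trans natDegree_quadratic_le)

/-- The two-parameter normal form `f_{μ,t}` whose entropy on `[-1, 1]` is computed, as a map of the
whole line. For `μ ≠ 0` its denominator is everywhere positive. -/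
noncomputable def normalForm (μ t x : ℝ) : ℝ :=
  2 * μ * x * (t * x + 2) / (μ ^ 2 * x ^ 2 + (t * x + 2) ^ 2)

section NormalForm

variable {μ t : ℝ}

lemma abs_normalForm_le_one (μ t x : ℝ) : |normalForm μ t x| ≤ 1 := by
  rw [normalForm, abs_div, abs_of_nonneg (by positivity : 0 ≤ μ ^ 2 * x ^ 2 + (t * x + 2) ^ 2)]
  refine div_le_one_of_le₀ (abs_le.2 ?_) (by positivity)
  constructor <;> linarith [sq_nonneg (μ * x + (t * x + 2)), sq_nonneg (μ * x - (t * x + 2))]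

lemma mapsTo_normalForm (μ t : ℝ) : MapsTo (normalForm μ t) (Icc (-1) 1) (Icc (-1) 1) :=
  fun x _ ↦ abs_le.1 (abs_normalForm_le_one μ t x)

lemma normalForm_denom_pos (hμ : μ ≠ 0) (t x : ℝ) : 0 < μ ^ 2 * x ^ 2 + (t * x + 2) ^ 2 := by
  rcases eq_or_ne x 0 with rfl | hx
  · norm_num
  · positivity

lemma continuous_normalForm (hμ : μ ≠ 0) (t : ℝ) : Continuous (normalForm μ t) :=
  Continuous.div (by fun_prop) (by fun_prop) fun x ↦ (normalForm_denom_pos hμ t x).ne'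

lemma encard_normalForm_fiber_le_two (hμ : μ ≠ 0) (t y : ℝ) :
    (normalForm μ t ⁻¹' {y}).encard ≤ 2 := by
  have hne : y * (μ ^ 2 + t ^ 2) - 2 * μ * t ≠ 0 ∨ 4 * (t * y - μ) ≠ 0 ∨ 4 * y ≠ 0 := by
    rcases eq_or_ne y 0 with rfl | hy
    · simp [hμ]
    · simp [hy]
  refine (encard_mono fun x hx ↦ ?_).trans (encard_setOf_quadratic_eq_zero_le_two hne)
  have hx' : normalForm μ t x = y := hx
  rw [normalForm, div_eq_iff (normalForm_denom_pos hμ t x).ne'] at hx'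
  rw [mem_ofPred_eq]
  linear_combination -hx'

theorem coverEntropy_normalForm_le_log_two (hμ : μ ≠ 0) (t : ℝ) :
    coverEntropy (normalForm μ t) (Icc (-1) 1) ≤ ENNReal.log 2 :=
  coverEntropy_Icc_le_log_of_encard_fiber_le (continuous_normalForm hμ t).continuousOn
    (mapsTo_normalForm μ t) le_rfl fun y _ ↦
      (encard_mono inter_subset_right).trans (encard_normalForm_fiber_le_two hμ t y)

lemma normalForm_neg_neg (μ t x : ℝ) : normalForm μ (-t) (-x) = -normalForm μ t x := by
  simp only [normalForm]
  ring

lemma coverEntropy_normalForm_neg (μ t : ℝ) :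
    coverEntropy (normalForm μ (-t)) (Icc (-1) 1) = coverEntropy (normalForm μ t) (Icc (-1) 1) := by
  have hle (s : ℝ) : coverEntropy (normalForm μ (-s)) (Icc (-1) 1)
      ≤ coverEntropy (normalForm μ s) (Icc (-1) 1) := by
    have hconj : Semiconj Neg.neg (normalForm μ s) (normalForm μ (-s)) :=
      fun x ↦ (normalForm_neg_neg μ s x).symm
    simpa using coverEntropy_image_le_of_uniformContinuous hconj uniformContinuous_neg (Icc (-1) 1)
  exact (hle t).antisymm (by simpa using hle (-t))

lemma normalForm_two_div {u : ℝ} (hμ : μ ≠ 0) (hu : μ * u - t ≠ 0) :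
    normalForm μ t (2 / (μ * u - t)) = 2 * u / (1 + u ^ 2) := by
  have hu2 : 1 + u ^ 2 ≠ 0 := by positivity
  have hfactor : t * (2 / (μ * u - t)) + 2 = 2 * μ * u / (μ * u - t) := by
    field_simp
    ring
  have hdenom := (normalForm_denom_pos hμ t (2 / (μ * u - t))).ne'
  rw [hfactor] at hdenom
  rw [normalForm, hfactor, div_eq_div_iff hdenom hu2]
  field_simp

lemma normalForm_fixed {w : ℝ} (hμ : μ ≠ 0) (hw0 : w ≠ 0) (hw : 1 + w ^ 2 = μ - t * w) :
    normalForm μ t (2 * w / (1 + w ^ 2)) = 2 * w / (1 + w ^ 2) := by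
  have hw2 : 1 + w ^ 2 ≠ 0 := by positivity
  -- The point `2 * w / (1 + w ^ 2)` has coordinate `w⁻¹`, and `u ↦ 2 * u / (1 + u ^ 2)` takes the
  -- same value at `w` and `w⁻¹`.
  have hinv : μ * w⁻¹ - t = (1 + w ^ 2) / w := by
    field_simp
    linarith
  have := normalForm_two_div (t := t) hμ (hinv ▸ div_ne_zero hw2 hw0)
  rw [hinv, div_div_eq_mul_div] at this
  rw [this]
  field_simp
  ring

theorem log_two_le_coverEntropy_normalForm {w : ℝ} (hμ : μ < 0) (ht : t < 0)
    (hw : 1 + w ^ 2 = μ - t * w) (hlt : μ * w - t < -2) :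
    ENNReal.log 2 ≤ coverEntropy (normalForm μ t) (Icc (-1) 1) := by
  have hw_pos : 0 < w := pos_of_mul_neg_right (by linarith [sq_nonneg w] : t * w < 0) ht.le
  have hw2 : 0 < 1 + w ^ 2 := by positivity
  set a := 2 / (μ * w - t) with ha
  set m := 2 / (μ * (-1) - t) with hm
  set b := 2 * w / (1 + w ^ 2) with hb
  have hfa : normalForm μ t a = b := normalForm_two_div hμ.ne (by linarith)
  have hfb : normalForm μ t b = b := normalForm_fixed hμ.ne hw_pos.ne' hw
  have hfm : normalForm μ t m = -1 := by
    rw [hm, normalForm_two_div hμ.ne (by linarith)]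
    norm_num
  have ha_gt : -1 < a := by
    rw [ha, lt_div_iff_of_neg (by linarith)]
    linarith
  have ham : a ≤ m :=
    (div_nonpos_of_nonneg_of_nonpos zero_le_two (by linarith)).trans
      (div_nonneg zero_le_two (by linarith))
  have hmb : m ≤ b := by
    rw [hm, hb, div_le_div_iff₀ (by linarith) hw2]
    linarith [mul_neg_of_neg_of_pos hμ hw_pos]
  have hb_le : b ≤ 1 := by
    rw [hb, div_le_one hw2]
    linarith [sq_nonneg (w - 1)]
  have hhorseshoe := isHorseshoe_of_fold (continuous_normalForm hμ.ne t).continuousOn ham hmb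
    hfa.ge hfb.ge (hfm ▸ ha_gt)
  refine hhorseshoe.log_card_le_coverEntropy (iUnion_subset (Fin.forall_fin_two.2 ⟨?_, ?_⟩))
  · exact inter_subset_left.trans (Icc_subset_Icc ha_gt.le (hmb.trans hb_le))
  · exact inter_subset_left.trans (Icc_subset_Icc (ha_gt.le.trans ham) hb_le)

lemma exists_fixed_point_parameter (hμ : μ ≤ -3) (ht : t < 0) (hpar : 0 < t ^ 2 / 4 + μ - 1) :
    ∃ w, 1 + w ^ 2 = μ - t * w ∧ μ * w - t < -2 := by
  set D := √(t ^ 2 + 4 * μ - 4)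
  have hD_pos : 0 < D := Real.sqrt_pos.2 (by linarith)
  have hD_sq : D ^ 2 = t ^ 2 + 4 * μ - 4 := Real.sq_sqrt (by linarith)
  have ht4 : t < -4 := by nlinarith
  refine ⟨(-t + D) / 2, by linarith, ?_⟩
  calc μ * ((-t + D) / 2) - t ≤ -3 * ((-t + D) / 2) - t := by gcongr; linarith
    _ < t / 2 := by linarith
    _ < -2 := by linarith

end NormalForm

theorem entropy_log_two_outside_parabola_general (μ t : ℝ) (hμ : μ ≤ -3)
    (hpar : 0 < t ^ 2 / 4 + μ - 1) :
    ∃ hmaps : MapsTo (normalForm μ t) (Icc (-1) 1) (Icc (-1) 1),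
      coverEntropy (hmaps.restrict _ _ _) univ = (Real.log 2 : EReal) := by
  refine ⟨mapsTo_normalForm μ t, ?_⟩
  have hlog : ENNReal.log 2 = (Real.log 2 : EReal) := by
    simpa using (ENNReal.log_ofReal_of_pos zero_lt_two)
  rw [coverEntropy_restrict, ← hlog]
  refine (coverEntropy_normalForm_le_log_two (by linarith) t).antisymm ?_
  wlog ht : t < 0 generalizing t
  · have ht_pos : 0 < t := lt_of_le_of_ne (not_lt.1 ht) fun h ↦ by subst h; linarith
    rw [← coverEntropy_normalForm_neg]
    exact this (-t) (by simpa using hpar) (neg_neg_of_pos ht_pos)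
  obtain ⟨w, hw, hlt⟩ := exists_fixed_point_parameter hμ ht hpar
  exact log_two_le_coverEntropy_normalForm (by linarith) ht hw hlt

/-- Observation 4.i: for `μ < −4`, `t < 0` outside the parabola `μ = 1 − t²/4`, the
normal-form map `f_{μ,t}` preserves `[−1,1]` and the topological entropy of the induced
self-map of `[−1,1]` is `log 2`. -/
theorem entropy_log_two_outside_parabola (μ t : ℝ) (hμ : μ < -4) (ht : t < 0)
    (hpar : 0 < t ^ 2 / 4 + μ - 1) :
    ∃ hmaps : Set.MapsTo
        (fun x : ℝ => 2 * μ * x * (t * x + 2) / (μ ^ 2 * x ^ 2 + (t * x + 2) ^ 2))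
        (Set.Icc (-1 : ℝ) 1) (Set.Icc (-1 : ℝ) 1),
      Dynamics.coverEntropy (Set.MapsTo.restrict _ _ _ hmaps) Set.univ
        = (Real.log 2 : EReal) :=
  entropy_log_two_outside_parabola_general μ t (by linarith) hpar
end

section
/- For real parameters μ > 0 and t with 0 < t < 2 and μ + t > 2, define f_{μ,t} : ℝ → ℝ by f_{μ,t}(x) = 2μx(tx+2)/(μ²x² + (tx+2)²). Then −1 < −2/(μ+t) < 0, f_{μ,t} maps the interval [−1,0] into itself, f_{μ,t} is strictly decreasing on [−1, −2/(μ+t)], and f_{μ,t} is strictly increasing on [−2/(μ+t), 0]; in particular the restriction of f_{μ,t} to [−1,0] is a unimodal self-map with unique turning point −2/(μ+t). -/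
/-! Put `u = t x + 2 + μ x` and `v = t x + 2 - μ x`, so that `f = (u² - v²) / (u² + v²)`. For two
points `x < y`, the sign of `f y - f x` is that of `v x * u y + u x * v y`, while
`v x * u y - u x * v y = 4 μ (y - x) > 0`. So `f` strictly increases where `u` and `v` are both
nonnegative and strictly decreases where `u ≤ 0 ≤ v`; on `[-1, 0]` the sign change of `u` is at
`-2 / (μ + t)`. -/

/-- The normal-form map `f_{μ,t}`, whose restrictions to suitable intervals, such as `[-1, 0]`, are
the unimodal maps under study. -/
def normalFormMap {K : Type*} [Field K] (μ t x : K) : K :=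
  2 * μ * x * (t * x + 2) / (μ ^ 2 * x ^ 2 + (t * x + 2) ^ 2)

section NormalFormMap

variable {K : Type*} [Field K] [LinearOrder K] [IsStrictOrderedRing K] {μ t x y : K}

theorem normalFormMap_denom_pos (hμ : μ ≠ 0) : 0 < μ ^ 2 * x ^ 2 + (t * x + 2) ^ 2 := by
  rcases eq_or_ne x 0 with rfl | hx
  · norm_num
  · positivity

theorem abs_normalFormMap_le_one : |normalFormMap μ t x| ≤ 1 := by
  have hden : 0 ≤ μ ^ 2 * x ^ 2 + (t * x + 2) ^ 2 := by positivity
  rw [normalFormMap, abs_div, abs_of_nonneg hden]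
  refine div_le_one_of_le₀ (abs_le.mpr ⟨?_, ?_⟩) hden
  · linarith [sq_nonneg (μ * x + (t * x + 2))]
  · linarith [sq_nonneg (μ * x - (t * x + 2))]

theorem normalFormMap_nonpos (hμ : 0 ≤ μ) (hx : x ≤ 0) (hb : 0 ≤ t * x + 2) :
    normalFormMap μ t x ≤ 0 :=
  div_nonpos_of_nonpos_of_nonneg
    (mul_nonpos_of_nonpos_of_nonneg (mul_nonpos_of_nonneg_of_nonpos (by positivity) hx) hb)
    (by positivity)

theorem normalFormMap_lt_iff (hμ : 0 < μ) :
    normalFormMap μ t x < normalFormMap μ t y ↔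
      0 < (y - x) * ((t * x + 2) * (t * y + 2) - μ * x * (μ * y)) := by
  have cross_sub :
      2 * μ * y * (t * y + 2) * (μ ^ 2 * x ^ 2 + (t * x + 2) ^ 2)
        - 2 * μ * x * (t * x + 2) * (μ ^ 2 * y ^ 2 + (t * y + 2) ^ 2)
        = 4 * μ * ((y - x) * ((t * x + 2) * (t * y + 2) - μ * x * (μ * y))) := by ring
  rw [normalFormMap, normalFormMap,
    div_lt_div_iff₀ (normalFormMap_denom_pos hμ.ne') (normalFormMap_denom_pos hμ.ne'),
    ← sub_pos, cross_sub, mul_pos_iff_of_pos_left (by positivity)]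

theorem strictMonoOn_normalFormMap (hμ : 0 < μ) :
    StrictMonoOn (normalFormMap μ t) {x | |μ * x| ≤ t * x + 2} := by
  intro x hx y hy hxy
  have hux : 0 ≤ t * x + 2 + μ * x := by linarith [neg_le_of_abs_le hx]
  have hvy : 0 ≤ t * y + 2 - μ * y := sub_nonneg.mpr (le_of_abs_le hy)
  have huv : 0 ≤ (t * x + 2 + μ * x) * (t * y + 2 - μ * y) := mul_nonneg hux hvy
  have hμxy : 0 < μ * (y - x) := mul_pos hμ (sub_pos.mpr hxy)
  have hprod : 0 < (t * x + 2) * (t * y + 2) - μ * x * (μ * y) := by linarith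
  exact (normalFormMap_lt_iff hμ).mpr (mul_pos (sub_pos.mpr hxy) hprod)

theorem strictAntiOn_normalFormMap (hμ : 0 < μ) :
    StrictAntiOn (normalFormMap μ t) {x | |t * x + 2| ≤ -(μ * x)} := by
  intro x hx y hy hxy
  have hvx : 0 ≤ t * x + 2 - μ * x := by linarith [neg_le_of_abs_le hx]
  have huy : t * y + 2 + μ * y ≤ 0 := by linarith [le_of_abs_le hy]
  have hvu : (t * x + 2 - μ * x) * (t * y + 2 + μ * y) ≤ 0 :=
    mul_nonpos_of_nonneg_of_nonpos hvx huy
  have hμxy : 0 < μ * (y - x) := mul_pos hμ (sub_pos.mpr hxy)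
  have hprod : (t * y + 2) * (t * x + 2) - μ * y * (μ * x) < 0 := by linarith
  exact (normalFormMap_lt_iff hμ).mpr (mul_pos_of_neg_of_neg (sub_neg.mpr hxy) hprod)

theorem mul_add_two_nonneg (ht : t ≤ 2) (hx : x ∈ Set.Icc (-1) 0) : 0 ≤ t * x + 2 := by
  linarith [mul_le_mul_of_nonpos_right ht hx.2, hx.1]

theorem mapsTo_normalFormMap_Icc (hμ : 0 ≤ μ) (ht : t ≤ 2) :
    Set.MapsTo (normalFormMap μ t) (Set.Icc (-1) 0) (Set.Icc (-1) 0) := fun _ hx =>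
  ⟨(abs_le.mp abs_normalFormMap_le_one).1,
    normalFormMap_nonpos hμ hx.2 (mul_add_two_nonneg ht hx)⟩

theorem strictAntiOn_normalFormMap_Icc (hμ : 0 < μ) (ht : t ≤ 2) (hs : 0 < μ + t) :
    StrictAntiOn (normalFormMap μ t) (Set.Icc (-1) (-2 / (μ + t))) := by
  refine (strictAntiOn_normalFormMap hμ).mono fun x ⟨hx₁, hxc⟩ => ?_
  have hx₀ : x ≤ 0 := hxc.trans (div_nonpos_of_nonpos_of_nonneg (by norm_num) hs.le)
  have hb : 0 ≤ t * x + 2 := mul_add_two_nonneg ht ⟨hx₁, hx₀⟩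
  rw [le_div_iff₀ hs] at hxc
  rw [Set.mem_ofPred_eq, abs_of_nonneg hb]
  linarith

theorem strictMonoOn_normalFormMap_Icc (hμ : 0 < μ) (hs : 0 < μ + t) :
    StrictMonoOn (normalFormMap μ t) (Set.Icc (-2 / (μ + t)) 0) := by
  refine (strictMonoOn_normalFormMap hμ).mono fun x ⟨hcx, hx₀⟩ => ?_
  rw [div_le_iff₀ hs] at hcx
  rw [Set.mem_ofPred_eq, abs_of_nonpos (mul_nonpos_of_nonneg_of_nonpos hμ.le hx₀)]
  linarith

theorem unimodal_family_one_general (ht : t ≤ 2) (hsum : 2 < μ + t) :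
    (-1 < -2 / (μ + t) ∧ -2 / (μ + t) < 0) ∧
    Set.MapsTo (normalFormMap μ t) (Set.Icc (-1) 0) (Set.Icc (-1) 0) ∧
    StrictAntiOn (normalFormMap μ t) (Set.Icc (-1) (-2 / (μ + t))) ∧
    StrictMonoOn (normalFormMap μ t) (Set.Icc (-2 / (μ + t)) 0) := by
  have hμ : 0 < μ := by linarith
  have hs : 0 < μ + t := by linarith
  have hc₁ : -1 < -2 / (μ + t) := by
    rw [lt_div_iff₀ hs]
    linarith
  have hc₀ : -2 / (μ + t) < 0 := div_neg_of_neg_of_pos (by norm_num) hs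
  exact ⟨⟨hc₁, hc₀⟩, mapsTo_normalFormMap_Icc hμ.le ht,
    strictAntiOn_normalFormMap_Icc hμ ht hs, strictMonoOn_normalFormMap_Icc hμ hs⟩

end NormalFormMap

/-- The family `𝓕₁`: for `μ, t > 0` with `2 − μ < t < 2`, the normal-form map `f_{μ,t}`
restricts to a unimodal self-map of `[−1,0]` with unique turning point `−2/(μ+t)`. -/
theorem unimodal_family_one (μ t : ℝ) (hμ : 0 < μ) (ht0 : 0 < t) (ht2 : t < 2)
    (hsum : 2 < μ + t) :
    let f : ℝ → ℝ := fun x => 2 * μ * x * (t * x + 2) / (μ ^ 2 * x ^ 2 + (t * x + 2) ^ 2)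
    (-1 < -2 / (μ + t) ∧ -2 / (μ + t) < 0) ∧
    Set.MapsTo f (Set.Icc (-1 : ℝ) 0) (Set.Icc (-1 : ℝ) 0) ∧
    StrictAntiOn f (Set.Icc (-1 : ℝ) (-2 / (μ + t))) ∧
    StrictMonoOn f (Set.Icc (-2 / (μ + t)) (0 : ℝ)) :=
  unimodal_family_one_general ht2.le hsum
end
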